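/- Let g be a k-step nilpotent finite-dimensional real Lie algebra with an abelian complex structure J, let c be the center of g, and suppose c^{1,0} = (c ⊗ ℂ) ∩ g^{1,0} is one-dimensional, spanned by V. Then for every T ∈ g_J^{k−2,(1,0)} and every Ȳ ∈ g^{0,1}, the g^{1,0}-component π^{1,0}([T, Ȳ]) of [T, Ȳ] (with respect to g_ℂ = g^{1,0} ⊕ g^{0,1}) lies in the complex line ℂ·V; consequently V ∧ π^{1,0}([T, Ȳ]) = 0 in Λ² g_ℂ. (This is exactly the statement that the invariant bivector Λ = V ∧ T satisfies ∂̄Λ = 0, so that Λ is an invariant holomorphic Poisson structure.) -/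

import Mathlib

open scoped TensorProduct

noncomputable section

/-- The `c`-eigenspace of the ℂ-linear extension of `J` on the complexification `ℂ ⊗[ℝ] g`. -/
def eig (g : Type) [LieRing g] [LieAlgebra ℝ g] (J : g →ₗ[ℝ] g) (c : ℂ) :
    Submodule ℂ (ℂ ⊗[ℝ] g) where
  carrier := {x | J.baseChange ℂ x = c • x}
  add_mem' := by
    intro a b ha hb
    simp only [Set.mem_setOf_eq, map_add] at *
    rw [ha, hb, smul_add]
  zero_mem' := by simp
  smul_mem' := by
    intro t x hx
    simp only [Set.mem_setOf_eq, map_smul] at *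
    rw [hx, smul_comm]

/-- The lower central series: `lcs g 0 = g`, `lcs g (m+1) = [lcs g m, g]`. -/
def lcs (g : Type) [LieRing g] [LieAlgebra ℝ g] : ℕ → Submodule ℝ g
  | 0 => ⊤
  | m + 1 => Submodule.span ℝ {x : g | ∃ a ∈ lcs g m, ∃ b : g, ⁅a, b⁆ = x}

/-- `g_J^m = g^m + J(g^m)`. -/
def gJ (g : Type) [LieRing g] [LieAlgebra ℝ g] (J : g →ₗ[ℝ] g) (m : ℕ) : Submodule ℝ g :=
  lcs g m ⊔ Submodule.map J (lcs g m)

/-- Complexification of a real subspace of `g`, inside `ℂ ⊗[ℝ] g`. -/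
def cxS (g : Type) [LieRing g] [LieAlgebra ℝ g] (p : Submodule ℝ g) :
    Submodule ℂ (ℂ ⊗[ℝ] g) := p.baseChange ℂ

/-- `g_J^{m,(1,0)}`. -/
def gJ10 (g : Type) [LieRing g] [LieAlgebra ℝ g] (J : g →ₗ[ℝ] g) (m : ℕ) :
    Submodule ℂ (ℂ ⊗[ℝ] g) := cxS g (gJ g J m) ⊓ eig g J Complex.I

/-- `g_J^{m,(0,1)}`. -/
def gJ01 (g : Type) [LieRing g] [LieAlgebra ℝ g] (J : g →ₗ[ℝ] g) (m : ℕ) :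
    Submodule ℂ (ℂ ⊗[ℝ] g) := cxS g (gJ g J m) ⊓ eig g J (-Complex.I)

/-- The center of `g`, as a submodule. -/
def centerS (g : Type) [LieRing g] [LieAlgebra ℝ g] : Submodule ℝ g where
  carrier := {A | ∀ B : g, ⁅A, B⁆ = 0}
  add_mem' := by
    intro a b ha hb B
    rw [add_lie, ha B, hb B, add_zero]
  zero_mem' := fun B => zero_lie B
  smul_mem' := by
    intro c a ha B
    rw [smul_lie, ha B, smul_zero]

/-- Complex conjugation on the complexification `ℂ ⊗[ℝ] g` (an ℝ-linear map). -/
def conjC (g : Type) [AddCommGroup g] [Module ℝ g] :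
    ℂ ⊗[ℝ] g →ₗ[ℝ] ℂ ⊗[ℝ] g :=
  LinearMap.rTensor g Complex.conjAe.toLinearMap

/-!
Since `J² = -1` and `[JA, JB] = [A, B]`, the bracket satisfies `[JA, B] = -[A, JB]`. Hence
`[g_J^m, g] ⊆ g^{m+1}`, and the center is `J`-invariant. If `g^{n+2} = 0` then `g^{n+1}` is central,
so complexifying gives `[T, Ȳ] ∈ c ⊗ ℂ` for `T` in the complexification of `g_J^n`. As `c ⊗ ℂ` is
invariant under `J_ℂ`, it contains the `g^{1,0}`-component of each of its elements, so the component
of `[T, Ȳ]` lies in `c^{1,0}`.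
-/

theorem baseChange_apply_mem_baseChange {R A M N : Type*} [CommSemiring R] [Semiring A]
    [Algebra R A] [AddCommMonoid M] [Module R M] [AddCommMonoid N] [Module R N] {f : M →ₗ[R] N}
    {p : Submodule R M} {q : Submodule R N} (hf : ∀ a ∈ p, f a ∈ q) {x : A ⊗[R] M}
    (hx : x ∈ p.baseChange A) : f.baseChange A x ∈ q.baseChange A := by
  suffices p.baseChange A ≤ (q.baseChange A).comap (f.baseChange A) from this hx
  rw [Submodule.baseChange_eq_span, Submodule.span_le]
  rintro _ ⟨a, ha, rfl⟩
  exact Submodule.tmul_mem_baseChange_of_mem 1 (hf a ha)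

theorem lie_mem_baseChange {R A L M : Type*} [CommRing R] [CommRing A] [Algebra R A] [LieRing L]
    [LieAlgebra R L] [AddCommGroup M] [Module R M] [LieRingModule L M] [LieModule R L M]
    {p : Submodule R L} {q r : Submodule R M} (h : ∀ a ∈ p, ∀ m ∈ q, ⁅a, m⁆ ∈ r)
    {x : A ⊗[R] L} (hx : x ∈ p.baseChange A) {y : A ⊗[R] M} (hy : y ∈ q.baseChange A) :
    ⁅x, y⁆ ∈ r.baseChange A := by
  let lieRight : A ⊗[R] L →ₗ[A] A ⊗[R] M :=
    (LieModule.toEnd A (A ⊗[R] L) (A ⊗[R] M) : A ⊗[R] L →ₗ[A] Module.End A (A ⊗[R] M)).flip y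
  suffices p.baseChange A ≤ (r.baseChange A).comap lieRight from this hx
  rw [Submodule.baseChange_eq_span, Submodule.span_le]
  rintro _ ⟨a, ha, rfl⟩
  have h_lie : ⁅(1 : A) ⊗ₜ[R] a, y⁆ = (LieModule.toEnd R L M a).baseChange A y :=
    LinearMap.congr_fun (LieModule.toEnd_baseChange R A L M a) y
  change ⁅(1 : A) ⊗ₜ[R] a, y⁆ ∈ r.baseChange A
  rw [h_lie]
  exact baseChange_apply_mem_baseChange (h a ha) hy

theorem mem_of_mem_eigenspace_of_sub_mem_eigenspace {K M : Type*} [Field K] [AddCommGroup M]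
    [Module K M] {f : Module.End K M} {p : Submodule K M} (hp : p ∈ f.invtSubmodule) {μ ν : K}
    (hμν : μ ≠ ν) {x w : M} (hx : x ∈ p) (hw : w ∈ f.eigenspace μ)
    (hxw : x - w ∈ f.eigenspace ν) : w ∈ p := by
  rw [Module.End.mem_eigenspace_iff] at hw hxw
  have h_smul : (μ - ν) • w = f x - ν • x := by
    rw [map_sub, hw, sub_eq_iff_eq_add] at hxw
    rw [hxw]
    module
  rw [← p.smul_mem_iff (sub_ne_zero.2 hμν), h_smul]
  exact sub_mem (hp hx) (p.smul_mem ν hx)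

theorem lie_map_left_eq_neg_lie_map_right {L : Type*} [LieRing L] {J : L → L}
    (hJ2 : ∀ v, J (J v) = -v) (hab : ∀ A B, ⁅J A, J B⁆ = ⁅A, B⁆) (A B : L) :
    ⁅J A, B⁆ = -⁅A, J B⁆ := by
  rw [← hab (J A) B, hJ2, neg_lie]

section LieAlgebra

variable {g : Type} [LieRing g] [LieAlgebra ℝ g] {J : g →ₗ[ℝ] g} {n : ℕ}

theorem eig_eq_eigenspace (c : ℂ) : eig g J c = Module.End.eigenspace (J.baseChange ℂ) c := by
  ext x
  exact Module.End.mem_eigenspace_iff.symm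

theorem lie_mem_lcs_succ {a : g} (ha : a ∈ lcs g n) (b : g) : ⁅a, b⁆ ∈ lcs g (n + 1) :=
  Submodule.subset_span ⟨a, ha, b, rfl⟩

theorem lcs_le_centerS (h : lcs g (n + 1) = ⊥) : lcs g n ≤ centerS g := fun _ ha b ↦
  (Submodule.mem_bot ℝ).1 (h ▸ lie_mem_lcs_succ ha b)

theorem lie_mem_lcs_succ_of_mem_gJ (hJ : ∀ A B, ⁅J A, B⁆ = -⁅A, J B⁆) {a : g}
    (ha : a ∈ gJ g J n) (b : g) : ⁅a, b⁆ ∈ lcs g (n + 1) := by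
  obtain ⟨x, hx, _, ⟨y, hy, rfl⟩, rfl⟩ := Submodule.mem_sup.1 ha
  rw [add_lie, hJ]
  exact add_mem (lie_mem_lcs_succ hx b) (neg_mem (lie_mem_lcs_succ hy (J b)))

theorem map_mem_centerS (hJ : ∀ A B, ⁅J A, B⁆ = -⁅A, J B⁆) {a : g} (ha : a ∈ centerS g) :
    J a ∈ centerS g := fun b ↦ by
  rw [hJ, ha (J b), neg_zero]

theorem mem_cxS_of_mem_eig_of_sub_mem_eig {p : Submodule ℝ g} (hp : ∀ a ∈ p, J a ∈ p)
    {x w : ℂ ⊗[ℝ] g} (hx : x ∈ cxS g p) (hw : w ∈ eig g J Complex.I)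
    (hxw : x - w ∈ eig g J (-Complex.I)) : w ∈ cxS g p := by
  rw [eig_eq_eigenspace] at hw hxw
  exact mem_of_mem_eigenspace_of_sub_mem_eigenspace
    (fun _ ↦ baseChange_apply_mem_baseChange hp) (self_ne_neg.2 Complex.I_ne_zero) hx hw hxw

theorem lie_mem_cxS_centerS (hJ : ∀ A B, ⁅J A, B⁆ = -⁅A, J B⁆) (hstep : lcs g (n + 2) = ⊥)
    {T : ℂ ⊗[ℝ] g} (hT : T ∈ cxS g (gJ g J n)) (Y : ℂ ⊗[ℝ] g) : ⁅T, Y⁆ ∈ cxS g (centerS g) := by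
  have h_lie : ∀ a ∈ gJ g J n, ∀ b ∈ (⊤ : Submodule ℝ g), ⁅a, b⁆ ∈ centerS g :=
    fun _ ha b _ ↦ lcs_le_centerS hstep (lie_mem_lcs_succ_of_mem_gJ hJ ha b)
  exact lie_mem_baseChange h_lie hT (by rw [Submodule.baseChange_top]; exact Submodule.mem_top)

end LieAlgebra

theorem statement7_general {g : Type} [LieRing g] [LieAlgebra ℝ g] {J : g →ₗ[ℝ] g}
    (hJ2 : ∀ v : g, J (J v) = -v) (hab : ∀ A B : g, ⁅J A, J B⁆ = ⁅A, B⁆) {n : ℕ}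
    (hstep : lcs g (n + 2) = ⊥) {T : ℂ ⊗[ℝ] g} (hT : T ∈ cxS g (gJ g J n)) {Y w : ℂ ⊗[ℝ] g}
    (hw : w ∈ eig g J Complex.I) (hTYw : ⁅T, Y⁆ - w ∈ eig g J (-Complex.I)) :
    w ∈ cxS g (centerS g) ⊓ eig g J Complex.I := by
  have hJ : ∀ A B, ⁅J A, B⁆ = -⁅A, J B⁆ := lie_map_left_eq_neg_lie_map_right hJ2 hab
  have hTY : ⁅T, Y⁆ ∈ cxS g (centerS g) := lie_mem_cxS_centerS hJ hstep hT Y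
  exact ⟨mem_cxS_of_mem_eig_of_sub_mem_eig (fun _ ↦ map_mem_centerS hJ) hTY hw hTYw, hw⟩

/-- Let `g` be `k`-step nilpotent with an abelian complex structure `J`,
with center `c` such that `c^{1,0}` is one-dimensional, spanned by `V`. Then for every
`T ∈ g_J^{k-2,(1,0)}` and `Ȳ ∈ g^{0,1}`, the `g^{1,0}`-component `w` of `[T, Ȳ]` lies in
`ℂ·V`, and consequently `V ∧ w = 0` in the exterior algebra of `g_ℂ`. -/
theorem statement7 (g : Type) [LieRing g] [LieAlgebra ℝ g] [FiniteDimensional ℝ g]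
    (J : g →ₗ[ℝ] g) (hJ2 : ∀ v : g, J (J v) = -v)
    (hab : ∀ A B : g, ⁅J A, J B⁆ = ⁅A, B⁆)
    (k : ℕ) (hk : 2 ≤ k) (hstep : lcs g k = ⊥) (hstep' : lcs g (k - 1) ≠ ⊥)
    (V : ℂ ⊗[ℝ] g) (hV : V ≠ 0)
    (hVspan : cxS g (centerS g) ⊓ eig g J Complex.I = Submodule.span ℂ {V}) :
    ∀ T ∈ gJ10 g J (k - 2), ∀ Y ∈ eig g J (-Complex.I),
      ∀ w ∈ eig g J Complex.I, ⁅T, Y⁆ - w ∈ eig g J (-Complex.I) →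
        (∃ c : ℂ, w = c • V) ∧
        ExteriorAlgebra.ι ℂ V * ExteriorAlgebra.ι ℂ w = 0 := by
  intro T hT Y _ w hw hTYw
  obtain ⟨n, rfl⟩ := Nat.exists_eq_add_of_le' hk
  obtain ⟨c, rfl⟩ := Submodule.mem_span_singleton.1
    (hVspan ▸ statement7_general hJ2 hab hstep hT.1 hw hTYw)
  exact ⟨⟨c, rfl⟩, by rw [map_smul, mul_smul_comm, ExteriorAlgebra.ι_sq_zero, smul_zero]⟩
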